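/- A complementary symmetric Rote sequence v is not a fixed point of any primitive morphism over {0,1}. In particular, it suffices to show: if v is fixed by a primitive morphism ψ over {0,1} and the frequencies of both letters in v equal 1/2, then the dominant eigenvalue of the incidence matrix of ψ is a positive integer; and that every derivated sequence of v is a 3iet sequence with irrational letter frequencies whose fixing morphism (if it exists) would need an irrational dominant eigenvalue in the spectrum of M_ψ — a contradiction. -/

import Mathlib

/-- Words over the binary alphabet `{0,1}`, represented as `ZMod 2`. -/
abbrev Word := List (ZMod 2)

/-- The letter-exchange morphism `E`. -/
def Ex (v : Word) : Word := v.map (· + 1)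

/-- `m` is an occurrence of the word `w` in the sequence `s`. -/
def OccAt (s : ℕ → ZMod 2) (w : Word) (m : ℕ) : Prop :=
  w = List.ofFn fun i : Fin w.length => s (m + i)

/-- `w` is a factor of the sequence `s`. -/
def IsFactor (s : ℕ → ZMod 2) (w : Word) : Prop := ∃ m, OccAt s w m

/-- Factor complexity of a sequence. -/
noncomputable def Cplx (s : ℕ → ZMod 2) (n : ℕ) : ℕ :=
  {w : Word | w.length = n ∧ IsFactor s w}.ncard

/-- `v` is a complementary symmetric Rote sequence. -/
def IsCSRote (v : ℕ → ZMod 2) : Prop :=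
  (∀ n, 1 ≤ n → Cplx v n = 2 * n) ∧
  (∀ w : Word, IsFactor v w → IsFactor v (Ex w))

/-- The sequence `t` is the image of `s` under the substitution `φ`. -/
def SubstImage (φ : ZMod 2 → Word) (s t : ℕ → ZMod 2) : Prop :=
  ∀ n, ∃ k, (List.ofFn fun i : Fin n => t i) <+:
              ((List.ofFn fun i : Fin k => s i).flatMap φ)

/-- The incidence matrix of a morphism over `{0,1}`: `(M_ψ)_{ab} = |ψ(a)|_b`. -/
def IncMat (ψ : ZMod 2 → Word) : Matrix (ZMod 2) (ZMod 2) ℕ :=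
  Matrix.of fun a b => (ψ a).count b

/-- `ψ` is a primitive morphism: some power of its incidence matrix is positive. -/
def PrimitiveMorphism (ψ : ZMod 2 → Word) : Prop :=
  ∃ k, 0 < k ∧ ∀ a b, 0 < ((IncMat ψ) ^ k) a b

/-! A power of a primitive morphism fixing `v` has a positive incidence matrix. The eigenvector `f`
of the smaller eigenvalue has Birkhoff sums along `v` that are sublinear, uniformly in the position
of the block. As the language of `v` is closed under letter exchange, this forces `f 0 + f 1 = 0`:
both letters are equally frequent in `v`, uniformly in the position.

Consider now the sequence of differences of `v` and the partial sums `D` of its signs. Expanding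
functions of two consecutive letters in the characters of `ZMod 2 × ZMod 2` and dropping the terms
that are sublinear by the first step gives `D (L n) = c * n + κ * D n + o(n)`, where `L n` is the
length of the image of the prefix of length `n` and satisfies `L n = ℓ * n + o(n)`, and `c`, `κ`,
`ℓ` are rational with `|κ| ≤ 1` and `2 ≤ ℓ`. Hence `D n / n` tends to the rational `c / (ℓ - κ)`,
and the letters of the difference sequence have rational frequencies.

On the other hand, the difference sequence is Sturmian. As at most one factor of each length is
right special, a letter of frequency `p / q` forces the frequency of every factor to be an integer
multiple of `1 / q`, which is positive by uniform recurrence. So there would be at most `q` factors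
of length `q`, but there are `q + 1`.
-/

open Finset Filter Matrix Topology

section Occurrences

variable {s : ℕ → ZMod 2} {x y w : Word} {a : ZMod 2} {m n : ℕ}

/-- The factor of length `n` of the sequence `s` starting at position `m`. -/
def window (s : ℕ → ZMod 2) (m n : ℕ) : Word := List.ofFn fun i : Fin n => s (m + i)

@[simp] lemma length_window (s : ℕ → ZMod 2) (m n : ℕ) : (window s m n).length = n :=
  List.length_ofFn

lemma occAt_iff_window_eq : OccAt s w m ↔ window s m w.length = w := eq_comm

lemma occAt_window (s : ℕ → ZMod 2) (m n : ℕ) : OccAt s (window s m n) m :=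
  occAt_iff_window_eq.2 (by rw [length_window])

lemma OccAt.window_eq (h : OccAt s w m) (hn : w.length = n) : window s m n = w :=
  hn ▸ occAt_iff_window_eq.1 h

lemma isFactor_window (s : ℕ → ZMod 2) (m n : ℕ) : IsFactor s (window s m n) :=
  ⟨m, occAt_window s m n⟩

instance : DecidablePred (OccAt s w) := fun m =>
  inferInstanceAs (Decidable (w = window s m w.length))

lemma occAt_iff_forall_getElem :
    OccAt s w m ↔ ∀ i (hi : i < w.length), s (m + i) = w[i] := by
  rw [occAt_iff_window_eq, window, List.ext_getElem_iff]
  simp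

lemma occAt_append : OccAt s (x ++ y) m ↔ OccAt s x m ∧ OccAt s y (m + x.length) := by
  simp only [occAt_iff_forall_getElem, List.length_append]
  refine ⟨fun h => ⟨fun i hi => ?_, fun i hi => ?_⟩, fun ⟨hx, hy⟩ i hi => ?_⟩
  · rw [h i (by omega), List.getElem_append_left hi]
  · rw [add_assoc, h (x.length + i) (by omega), List.getElem_append_right (by omega)]
    simp only [Nat.add_sub_cancel_left]
  · rcases lt_or_ge i x.length with hix | hix
    · rw [hx i hix, List.getElem_append_left hix]
    · rw [List.getElem_append_right hix, ← hy (i - x.length) (by omega)]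
      congr 1
      omega

@[simp] lemma occAt_singleton : OccAt s [a] m ↔ s m = a := by
  simp [occAt_iff_forall_getElem]

lemma occAt_cons : OccAt s (a :: w) m ↔ s m = a ∧ OccAt s w (m + 1) := by
  rw [← List.singleton_append, occAt_append, occAt_singleton, List.length_singleton]

lemma window_succ (s : ℕ → ZMod 2) (m n : ℕ) :
    window s m (n + 1) = window s m n ++ [s (m + n)] :=
  (occAt_append.2 ⟨occAt_window s m n, by simp⟩).window_eq (by simp)

lemma window_succ' (s : ℕ → ZMod 2) (m n : ℕ) :
    window s m (n + 1) = s m :: window s (m + 1) n :=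
  (occAt_cons.2 ⟨rfl, occAt_window s (m + 1) n⟩).window_eq (by simp)

lemma OccAt.exists_of_isInfix (h : OccAt s y m) (hxy : x <:+: y) :
    ∃ j, j + x.length ≤ y.length ∧ OccAt s x (m + j) := by
  obtain ⟨p, q, rfl⟩ := hxy
  exact ⟨p.length, by simp, (occAt_append.1 (occAt_append.1 h).1).2⟩

lemma window_prefix_window (s : ℕ → ZMod 2) (m : ℕ) {k n : ℕ} (h : k ≤ n) :
    window s m k <+: window s m n := by
  obtain ⟨l, rfl⟩ := Nat.exists_eq_add_of_le h
  refine ⟨window s (m + k) l, (OccAt.window_eq (occAt_append.2 ⟨occAt_window s m k, ?_⟩) ?_).symm⟩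
  · simpa using occAt_window s (m + k) l
  · simp

lemma exists_complement {v : ℕ → ZMod 2} (hE : ∀ w : Word, IsFactor v w → IsFactor v (Ex w))
    (m n : ℕ) : ∃ k, ∀ i < n, v (k + i) = v (m + i) + 1 := by
  obtain ⟨k, hk⟩ := hE _ (isFactor_window v m n)
  refine ⟨k, fun i hi => ?_⟩
  rw [occAt_iff_forall_getElem.1 hk i (by simpa [Ex] using hi)]
  simp [Ex, window]

end Occurrences

section FixedSequences

variable {ψ φ : ZMod 2 → Word} {v : ℕ → ZMod 2}

/-- The morphism `ψ` maps every prefix of `v` to a prefix of `v`. -/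
def FixesPrefixes (ψ : ZMod 2 → Word) (v : ℕ → ZMod 2) : Prop :=
  ∀ n, OccAt v ((window v 0 n).flatMap ψ) 0

lemma SubstImage.fixesPrefixes (h : SubstImage ψ v v) : FixesPrefixes ψ v := by
  intro n
  set x := (window v 0 n).flatMap ψ
  obtain ⟨k, hk⟩ := h x.length
  have hprefix : window v 0 x.length <+: (window v 0 k).flatMap ψ := by
    simpa only [window, zero_add] using hk
  have hlen : (window v 0 x.length).length = x.length := length_window ..
  refine occAt_iff_window_eq.2 ?_
  rcases le_total n k with hnk | hkn
  · exact (List.prefix_of_prefix_length_le hprefix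
      ((window_prefix_window v 0 hnk).flatMap ψ) hlen.le).eq_of_length hlen
  · exact (hprefix.trans ((window_prefix_window v 0 hkn).flatMap ψ)).eq_of_length hlen

lemma FixesPrefixes.comp (hψ : FixesPrefixes ψ v) (hφ : FixesPrefixes φ v) :
    FixesPrefixes (fun a => (ψ a).flatMap φ) v := by
  intro n
  rw [← List.flatMap_assoc, ← (hψ n).window_eq rfl]
  exact hφ _

lemma sum_map_eq_sum_count {M : Type*} [AddCommMonoid M] (w : Word) (f : ZMod 2 → M) :
    (w.map f).sum = ∑ a, w.count a • f a := by
  rw [sum_list_map_count]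
  refine sum_subset (subset_univ _) fun a _ ha => ?_
  rw [List.count_eq_zero_of_not_mem (mt List.mem_toFinset.2 ha), zero_smul]

lemma incMat_comp (ψ φ : ZMod 2 → Word) :
    IncMat (fun a => (ψ a).flatMap φ) = IncMat ψ * IncMat φ := by
  ext a b
  simp [IncMat, Matrix.mul_apply, List.count_flatMap, sum_map_eq_sum_count]

lemma FixesPrefixes.exists_incMat_eq_pow (h : FixesPrefixes ψ v) (k : ℕ) :
    ∃ φ, FixesPrefixes φ v ∧ IncMat φ = IncMat ψ ^ k := by
  induction k with
  | zero =>
    refine ⟨fun a => [a], fun n => by simpa using occAt_window v 0 n, ?_⟩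
    ext a b
    simp [IncMat, Matrix.one_apply, List.count_singleton]
  | succ k ih =>
    obtain ⟨φ, hφ, hM⟩ := ih
    exact ⟨_, hφ.comp h, by rw [incMat_comp, hM, pow_succ]⟩

/-- The position in `v` at which the image under `ψ` of the `n`-th letter of `v` begins. -/
def blockStart (ψ : ZMod 2 → Word) (v : ℕ → ZMod 2) (n : ℕ) : ℕ :=
  ((window v 0 n).flatMap ψ).length

@[simp] lemma blockStart_zero (ψ : ZMod 2 → Word) (v : ℕ → ZMod 2) : blockStart ψ v 0 = 0 := rfl

lemma blockStart_succ (ψ : ZMod 2 → Word) (v : ℕ → ZMod 2) (n : ℕ) :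
    blockStart ψ v (n + 1) = blockStart ψ v n + (ψ (v n)).length := by
  simp [blockStart, window_succ]

lemma FixesPrefixes.occAt_blockStart (h : FixesPrefixes ψ v) (n : ℕ) :
    OccAt v (ψ (v n)) (blockStart ψ v n) := by
  have := h (n + 1)
  rw [window_succ, List.flatMap_append, occAt_append] at this
  simpa [blockStart] using this.2

/-- A morphism with positive incidence matrix that fixes `v`. -/
structure PositivelyFixes (ψ : ZMod 2 → Word) (v : ℕ → ZMod 2) : Prop where
  fixesPrefixes : FixesPrefixes ψ v
  mem : ∀ a b, b ∈ ψ a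

lemma SubstImage.exists_positivelyFixes (h : SubstImage ψ v v) (hψ : PrimitiveMorphism ψ) :
    ∃ φ, PositivelyFixes φ v := by
  obtain ⟨k, -, hk⟩ := hψ
  obtain ⟨φ, hφ, hM⟩ := h.fixesPrefixes.exists_incMat_eq_pow k
  exact ⟨φ, hφ, fun a b => List.count_pos_iff.1 (show 0 < IncMat φ a b from hM ▸ hk a b)⟩

lemma PositivelyFixes.comp (hψ : PositivelyFixes ψ v) (hφ : PositivelyFixes φ v) :
    PositivelyFixes (fun a => (ψ a).flatMap φ) v where
  fixesPrefixes := hψ.fixesPrefixes.comp hφ.fixesPrefixes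
  mem a b := List.mem_flatMap.2 ⟨0, hψ.mem a 0, hφ.mem 0 b⟩

namespace PositivelyFixes

lemma occAt_blockStart (h : PositivelyFixes ψ v) (n : ℕ) :
    OccAt v (ψ (v n)) (blockStart ψ v n) :=
  h.fixesPrefixes.occAt_blockStart n

lemma two_le_length (h : PositivelyFixes ψ v) (a : ZMod 2) : 2 ≤ (ψ a).length :=
  calc 2 = ({0, 1} : Finset (ZMod 2)).card := rfl
    _ ≤ (ψ a).toFinset.card := card_le_card fun b _ => List.mem_toFinset.2 (h.mem a b)
    _ ≤ (ψ a).length := List.toFinset_card_le _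

end PositivelyFixes

lemma exists_forall_length_le (ψ : ZMod 2 → Word) : ∃ T, ∀ a, (ψ a).length ≤ T :=
  ⟨∑ a, (ψ a).length, fun a =>
    single_le_sum (f := fun a => (ψ a).length) (fun _ _ => zero_le) (mem_univ a)⟩

lemma PositivelyFixes.exists_blockStart_near (h : PositivelyFixes ψ v) :
    ∃ T, ∀ m, ∃ i, m ≤ blockStart ψ v i ∧ blockStart ψ v i ≤ m + T := by
  obtain ⟨T, hT⟩ := exists_forall_length_le ψ
  refine ⟨T, fun m => ?_⟩
  induction m with
  | zero => exact ⟨0, by simp⟩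
  | succ m ih =>
    obtain ⟨i, hmi, him⟩ := ih
    rcases hmi.eq_or_lt with rfl | hlt
    · have := hT (v i)
      have := h.two_le_length (v i)
      exact ⟨i + 1, by rw [blockStart_succ]; omega, by rw [blockStart_succ]; omega⟩
    · exact ⟨i, hlt, by omega⟩

end FixedSequences

section Recurrence

variable {ψ : ZMod 2 → Word} {s v : ℕ → ZMod 2}

/-- Every factor of `s` occurs in `s` with bounded gaps. -/
def UniformlyRecurrent (s : ℕ → ZMod 2) : Prop :=
  ∀ w, IsFactor s w → ∃ G, ∀ m, ∃ i, m ≤ i ∧ i < m + G ∧ OccAt s w i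

lemma length_mul_le_length_flatMap (w : Word) {n : ℕ} (hn : ∀ a, n ≤ (ψ a).length) :
    w.length * n ≤ (w.flatMap ψ).length := by
  have := (w.map fun a => (ψ a).length).card_nsmul_le_sum n (by simpa using fun a _ => hn a)
  simpa [List.length_flatMap] using this

lemma PositivelyFixes.exists_lt_length (h : PositivelyFixes ψ v) (n : ℕ) :
    ∃ φ, PositivelyFixes φ v ∧ ∀ a, n < (φ a).length := by
  induction n with
  | zero => exact ⟨ψ, h, fun a => zero_lt_two.trans_le (h.two_le_length a)⟩
  | succ n ih =>
    obtain ⟨φ, hφ, hn⟩ := ih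
    refine ⟨_, h.comp hφ, fun a => ?_⟩
    calc n + 1 < 2 * (n + 1) := by omega
      _ ≤ (ψ a).length * (n + 1) := Nat.mul_le_mul_right _ (h.two_le_length a)
      _ ≤ ((ψ a).flatMap φ).length := length_mul_le_length_flatMap (ψ a) hn

lemma PositivelyFixes.exists_window_isInfix (h : PositivelyFixes ψ v) (n : ℕ) :
    ∃ φ, PositivelyFixes φ v ∧ ∀ a, window v 0 n <:+: φ a := by
  obtain ⟨φ, hφ, hn⟩ := h.exists_lt_length n
  refine ⟨_, h.comp hφ, fun a => ?_⟩
  have hprefix : window v 0 n <+: φ (v 0) := by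
    rw [← (hφ.occAt_blockStart 0).window_eq rfl]
    exact window_prefix_window v 0 (hn (v 0)).le
  exact hprefix.isInfix.trans (List.infix_flatMap_of_mem (h.mem a (v 0)) φ)

lemma PositivelyFixes.uniformlyRecurrent (h : PositivelyFixes ψ v) : UniformlyRecurrent v := by
  rintro w ⟨k, hk⟩
  obtain ⟨φ, hφ, hinitial⟩ := h.exists_window_isInfix (k + w.length)
  have hinfix : ∀ a, w <:+: φ a := fun a => by
    have hsuffix : window v 0 (k + w.length) = window v 0 k ++ w :=
      (occAt_append.2 ⟨occAt_window v 0 k, by simpa using hk⟩).window_eq (by simp)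
    exact (hsuffix ▸ List.suffix_append _ w).isInfix.trans (hinitial a)
  obtain ⟨T, hT⟩ := hφ.exists_blockStart_near
  obtain ⟨T', hT'⟩ := exists_forall_length_le φ
  refine ⟨T + T' + 1, fun m => ?_⟩
  obtain ⟨i, hmi, him⟩ := hT m
  obtain ⟨j, hj, hocc⟩ := (hφ.occAt_blockStart i).exists_of_isInfix (hinfix (v i))
  have := hT' (v i)
  exact ⟨_, by omega, by omega, hocc⟩

/-- The sequence of differences of consecutive letters, which modulo `2` are also their sums. -/
def diffSeq (s : ℕ → ZMod 2) (n : ℕ) : ZMod 2 := s n + s (n + 1)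

lemma UniformlyRecurrent.diffSeq (h : UniformlyRecurrent s) : UniformlyRecurrent (diffSeq s) := by
  rintro w ⟨k, hk⟩
  obtain ⟨G, hG⟩ := h _ (isFactor_window s k (w.length + 1))
  refine ⟨G, fun m => ?_⟩
  obtain ⟨i, hmi, him, hi⟩ := hG m
  refine ⟨i, hmi, him, occAt_iff_forall_getElem.2 fun j hj => ?_⟩
  have hwindow : ∀ l ≤ w.length, s (i + l) = s (k + l) := fun l hl => by
    have hl' : l < (window s k (w.length + 1)).length := by rw [length_window]; omega
    rw [occAt_iff_forall_getElem.1 hi l hl', occAt_iff_forall_getElem.1 (occAt_window ..) l hl']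
  rw [← occAt_iff_forall_getElem.1 hk j hj, _root_.diffSeq, _root_.diffSeq, add_assoc, add_assoc,
    hwindow j hj.le, hwindow (j + 1) hj]

end Recurrence

section SublinearIncrements

/-- The increments of `F` are negligible compared with the distance between the two indices,
uniformly in the position; for the partial sums of a sequence this says that its averages over
long blocks tend uniformly to `0`. -/
def SublinearIncrements (F : ℕ → ℝ) : Prop :=
  ∀ ε > 0, ∃ C, ∀ m n, dist (F m) (F n) ≤ ε * dist m n + C

variable {F G : ℕ → ℝ}

lemma dist_le_mul_dist {K : ℝ} (h : ∀ n, dist (F n) (F (n + 1)) ≤ K) (m n : ℕ) :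
    dist (F m) (F n) ≤ K * dist m n := by
  wlog hmn : m ≤ n generalizing m n
  · rw [dist_comm, dist_comm m]
    exact this n m (le_of_not_ge hmn)
  calc dist (F m) (F n) ≤ ∑ _i ∈ Ico m n, K := dist_le_Ico_sum_of_dist_le hmn fun _ _ => h _
    _ = K * dist m n := by
      rw [sum_const, Nat.card_Ico, nsmul_eq_mul, Nat.cast_sub hmn, dist_comm, Nat.dist_eq,
        abs_of_nonneg (sub_nonneg.2 (Nat.cast_le.2 hmn)), mul_comm]

lemma mul_dist_le_dist {α : ℝ} (h : ∀ n, α ≤ F (n + 1) - F n) (m n : ℕ) :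
    α * dist m n ≤ dist (F m) (F n) := by
  wlog hmn : m ≤ n generalizing m n
  · rw [dist_comm, dist_comm (F m)]
    exact this n m (le_of_not_ge hmn)
  calc α * dist m n = ∑ _i ∈ Ico m n, α := by
        rw [sum_const, Nat.card_Ico, nsmul_eq_mul, Nat.cast_sub hmn, dist_comm, Nat.dist_eq,
          abs_of_nonneg (sub_nonneg.2 (Nat.cast_le.2 hmn)), mul_comm]
    _ ≤ ∑ i ∈ Ico m n, (F (i + 1) - F i) := sum_le_sum fun i _ => h i
    _ = F n - F m := sum_Ico_sub F hmn
    _ ≤ dist (F m) (F n) := by rw [dist_comm, Real.dist_eq]; exact le_abs_self _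

namespace SublinearIncrements

lemma of_bounded {C : ℝ} (h : ∀ n, |F n| ≤ C) : SublinearIncrements F := fun ε hε => by
  refine ⟨2 * C, fun m n => ?_⟩
  have : dist (F m) (F n) ≤ |F m| + |F n| := abs_sub _ _
  have := h m
  have := h n
  have : 0 ≤ ε * dist m n := by positivity
  linarith

lemma add (hF : SublinearIncrements F) (hG : SublinearIncrements G) :
    SublinearIncrements fun n => F n + G n := fun ε hε => by
  obtain ⟨C, hC⟩ := hF (ε / 2) (half_pos hε)
  obtain ⟨D, hD⟩ := hG (ε / 2) (half_pos hε)
  exact ⟨C + D, fun m n => by linarith [dist_add_add_le (F m) (G m) (F n) (G n), hC m n, hD m n]⟩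

lemma const_mul (hF : SublinearIncrements F) (c : ℝ) :
    SublinearIncrements fun n => c * F n := fun ε hε => by
  have : 0 < |c| + 1 := by positivity
  obtain ⟨C, hC⟩ := hF (ε / (|c| + 1)) (by positivity)
  refine ⟨(|c| + 1) * C, fun m n => ?_⟩
  calc dist (c * F m) (c * F n) = |c| * dist (F m) (F n) := by
        rw [Real.dist_eq, Real.dist_eq, ← mul_sub, abs_mul]
    _ ≤ (|c| + 1) * dist (F m) (F n) := by gcongr; linarith
    _ ≤ (|c| + 1) * (ε / (|c| + 1) * dist m n + C) := by gcongr; exact hC m n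
    _ = ε * dist m n + (|c| + 1) * C := by field_simp

lemma tendsto_div (hF : SublinearIncrements F) : Tendsto (fun n => F n / n) atTop (𝓝 0) := by
  refine Metric.tendsto_atTop.2 fun ε hε => ?_
  obtain ⟨C, hC⟩ := hF (ε / 2) (half_pos hε)
  obtain ⟨N, hN⟩ := exists_nat_gt ((C + |F 0|) / (ε / 2))
  refine ⟨N + 1, fun n hn => ?_⟩
  have hn₀ : (0 : ℝ) < n := by exact_mod_cast (Nat.succ_pos N).trans_le hn
  have hbound : C + |F 0| < ε / 2 * n := by
    rw [div_lt_iff₀' (half_pos hε)] at hN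
    have : (N : ℝ) ≤ n := by exact_mod_cast (Nat.le_succ N).trans hn
    nlinarith
  have hdist : dist n 0 = (n : ℝ) := by simp [Nat.dist_eq]
  rw [dist_zero_right, Real.norm_eq_abs, abs_div, Nat.abs_cast, div_lt_iff₀ hn₀]
  have := hC n 0
  rw [hdist] at this
  linarith [abs_sub_abs_le_abs_sub (F n) (F 0), Real.dist_eq (F n) (F 0)]

end SublinearIncrements

lemma exists_mem_lt_of_contraction {S : Set ℝ} {c ε : ℝ} (hne : S.Nonempty) (h₀ : ∀ h ∈ S, 0 ≤ h)
    (hc₀ : 0 ≤ c) (hc₁ : c < 1) (hS : ∀ h ∈ S, ∀ δ > 0, c * h + δ ∈ S) (hε : 0 < ε) :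
    ∃ h ∈ S, h < ε := by
  refine exists_lt_of_csInf_lt hne (lt_of_le_of_lt ?_ hε)
  have hle : ∀ δ > 0, sInf S ≤ c * sInf S + δ := fun δ hδ => by
    obtain ⟨h, hh, hlt⟩ := Real.lt_sInf_add_pos hne (half_pos hδ)
    have := csInf_le ⟨0, h₀⟩ (hS h hh (δ / 2) (half_pos hδ))
    nlinarith
  nlinarith [le_of_forall_pos_le_add hle]

/-- The increments of `G` are at most `h` times those of `Λ`, up to a bounded error. -/
def CoarseSlopeLE (G Λ : ℕ → ℝ) (h : ℝ) : Prop :=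
  ∃ C, ∀ m n, dist (G m) (G n) ≤ h * dist (Λ m) (Λ n) + C

section Renormalization

variable {R Λ : ℕ → ℝ} {L : ℕ → ℕ} {ρ θ K α β T : ℝ}

lemma dist_le_dist_add_of_near (hF : ∀ m n, dist (F m) (F n) ≤ K * dist m n) (hK : 0 ≤ K)
    {m m' n n' : ℕ} (hm : dist m m' ≤ T) (hn : dist n n' ≤ T) :
    dist (F m) (F n) ≤ dist (F m') (F n') + 2 * K * T := by
  have hm' : dist (F m) (F m') ≤ K * T := (hF m m').trans (by gcongr)
  have hn' : dist (F n') (F n) ≤ K * T := (hF n' n).trans (by rw [dist_comm n']; gcongr)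
  linarith [dist_triangle4 (F m) (F m') (F n') (F n)]

lemma CoarseSlopeLE.renormalize {h δ : ℝ} (hG : CoarseSlopeLE G Λ h)
    (hR : SublinearIncrements R) (hρ : 0 ≤ ρ) (hθ : 0 < θ) (hα : 0 < α) (hh : 0 ≤ h) (hδ : 0 < δ)
    (hαΛ : ∀ m n, α * dist m n ≤ dist (Λ m) (Λ n))
    (hΛβ : ∀ m n, dist (Λ m) (Λ n) ≤ β * dist m n) (hβ : 0 ≤ β)
    (hGK : ∀ m n, dist (G m) (G n) ≤ K * dist m n) (hK : 0 ≤ K)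
    (hdense : ∀ m, ∃ i, dist m (L i) ≤ T)
    (hexpand : ∀ i j, θ * dist (Λ i) (Λ j) ≤ dist (Λ (L i)) (Λ (L j)))
    (hcontract : ∀ i j,
      dist (G (L i)) (G (L j)) ≤ ρ * dist (G i) (G j) + dist (R i) (R j)) :
    CoarseSlopeLE G Λ (ρ / θ * h + δ) := by
  obtain ⟨C, hC⟩ := hG
  obtain ⟨D, hD⟩ := hR (θ * δ * α) (by positivity)
  refine ⟨(ρ / θ * h + δ) * (2 * β * T) + ρ * C + D + 2 * K * T, fun m n => ?_⟩
  obtain ⟨i, hi⟩ := hdense m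
  obtain ⟨j, hj⟩ := hdense n
  have hRΛ : dist (R i) (R j) ≤ θ * δ * dist (Λ i) (Λ j) + D :=
    calc dist (R i) (R j) ≤ θ * δ * (α * dist i j) + D := by rw [← mul_assoc]; exact hD i j
      _ ≤ θ * δ * dist (Λ i) (Λ j) + D := by gcongr; exact hαΛ i j
  have hΛ : dist (Λ (L i)) (Λ (L j)) ≤ dist (Λ m) (Λ n) + 2 * β * T :=
    dist_le_dist_add_of_near hΛβ hβ (by rwa [dist_comm]) (by rwa [dist_comm])
  calc dist (G m) (G n) ≤ dist (G (L i)) (G (L j)) + 2 * K * T :=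
        dist_le_dist_add_of_near hGK hK hi hj
    _ ≤ ρ * dist (G i) (G j) + dist (R i) (R j) + 2 * K * T := by gcongr; exact hcontract i j
    _ ≤ ρ * (h * dist (Λ i) (Λ j) + C) + (θ * δ * dist (Λ i) (Λ j) + D) + 2 * K * T := by
        gcongr; exact hC i j
    _ = (ρ / θ * h + δ) * (θ * dist (Λ i) (Λ j)) + ρ * C + D + 2 * K * T := by
        field_simp; ring
    _ ≤ (ρ / θ * h + δ) * (dist (Λ m) (Λ n) + 2 * β * T) + ρ * C + D + 2 * K * T := by
        gcongr; exact (hexpand i j).trans hΛ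
    _ = (ρ / θ * h + δ) * dist (Λ m) (Λ n) +
        ((ρ / θ * h + δ) * (2 * β * T) + ρ * C + D + 2 * K * T) := by ring

/-- Each renormalization improves the slope of `G` relative to `Λ` by the factor `ρ / θ < 1`, so the
infimum of these slopes is `0`. -/
lemma SublinearIncrements.of_renormalization (hR : SublinearIncrements R)
    (hρ : 0 ≤ ρ) (hρθ : ρ < θ) (hα : 0 < α)
    (hαΛ : ∀ m n, α * dist m n ≤ dist (Λ m) (Λ n))
    (hΛβ : ∀ m n, dist (Λ m) (Λ n) ≤ β * dist m n)
    (hGK : ∀ m n, dist (G m) (G n) ≤ K * dist m n)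
    (hdense : ∀ m, ∃ i, dist m (L i) ≤ T)
    (hexpand : ∀ i j, θ * dist (Λ i) (Λ j) ≤ dist (Λ (L i)) (Λ (L j)))
    (hcontract : ∀ i j,
      dist (G (L i)) (G (L j)) ≤ ρ * dist (G i) (G j) + dist (R i) (R j)) :
    SublinearIncrements G := by
  have hθ : 0 < θ := hρ.trans_lt hρθ
  have hdist : dist 0 1 = (1 : ℝ) := by simp [Nat.dist_eq]
  have hK : 0 ≤ K := by simpa [hdist] using dist_nonneg.trans (hGK 0 1)
  have hβ : 0 < β := by
    have := hαΛ 0 1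
    have := hΛβ 0 1
    simp only [hdist, mul_one] at *
    linarith
  have hne : {h | 0 ≤ h ∧ CoarseSlopeLE G Λ h}.Nonempty := by
    refine ⟨K / α, by positivity, 0, fun m n => ?_⟩
    calc dist (G m) (G n) ≤ K * dist m n := hGK m n
      _ = K / α * (α * dist m n) := by field_simp
      _ ≤ K / α * dist (Λ m) (Λ n) + 0 := by rw [add_zero]; gcongr; exact hαΛ m n
  intro ε hε
  obtain ⟨h, ⟨-, C, hC⟩, hhε⟩ := exists_mem_lt_of_contraction hne (fun h hh => hh.1)
    (div_nonneg hρ hθ.le) ((div_lt_one hθ).2 hρθ) (fun h ⟨hh, hG⟩ δ hδ => ⟨by positivity,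
      hG.renormalize hR hρ hθ hα hh hδ hαΛ hΛβ hβ.le hGK hK hdense hexpand hcontract⟩)
    (div_pos hε hβ)
  refine ⟨C, fun m n => ?_⟩
  calc dist (G m) (G n) ≤ h * dist (Λ m) (Λ n) + C := hC m n
    _ ≤ ε / β * (β * dist m n) + C := by gcongr; exact hΛβ m n
    _ = ε * dist m n + C := by field_simp

end Renormalization

end SublinearIncrements

section LetterSums

variable {ψ : ZMod 2 → Word} {v s : ℕ → ZMod 2} {f : ZMod 2 → ℝ}

/-- The Birkhoff sum of the function `f` over the first `n` letters of the sequence `s`. -/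
def letterSum (f : ZMod 2 → ℝ) (s : ℕ → ZMod 2) (n : ℕ) : ℝ := ∑ i ∈ range n, f (s i)

lemma letterSum_succ (f : ZMod 2 → ℝ) (s : ℕ → ZMod 2) (n : ℕ) :
    letterSum f s (n + 1) = letterSum f s n + f (s n) := sum_range_succ ..

lemma letterSum_smul (c : ℝ) (f : ZMod 2 → ℝ) (s : ℕ → ZMod 2) (n : ℕ) :
    letterSum (c • f) s n = c * letterSum f s n := (mul_sum ..).symm

lemma dist_letterSum_le {K : ℝ} (hf : ∀ a, |f a| ≤ K) (s : ℕ → ZMod 2) (m n : ℕ) :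
    dist (letterSum f s m) (letterSum f s n) ≤ K * dist m n :=
  dist_le_mul_dist (fun i => by simpa [letterSum_succ] using hf (s i)) m n

lemma mul_dist_le_dist_letterSum {α : ℝ} (hf : ∀ a, α ≤ f a) (s : ℕ → ZMod 2) (m n : ℕ) :
    α * dist m n ≤ dist (letterSum f s m) (letterSum f s n) :=
  mul_dist_le_dist (fun i => by simpa [letterSum_succ] using hf (s i)) m n

lemma OccAt.letterSum_add {w : Word} {m : ℕ} (h : OccAt s w m) (f : ZMod 2 → ℝ) :
    letterSum f s (m + w.length) = letterSum f s m + (w.map f).sum := by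
  induction w generalizing m with
  | nil => simp
  | cons a w ih =>
    obtain ⟨rfl, hw⟩ := occAt_cons.1 h
    rw [List.length_cons, add_comm w.length, ← add_assoc, ih hw, letterSum_succ, List.map_cons,
      List.sum_cons, add_assoc]

lemma FixesPrefixes.letterSum_blockStart (h : FixesPrefixes ψ v) (f : ZMod 2 → ℝ) (n : ℕ) :
    letterSum f v (blockStart ψ v n) = letterSum (fun a => ((ψ a).map f).sum) v n := by
  induction n with
  | zero => rfl
  | succ n ih =>
    rw [blockStart_succ, (h.occAt_blockStart n).letterSum_add, ih, letterSum_succ]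

lemma natCast_blockStart (ψ : ZMod 2 → Word) (v : ℕ → ZMod 2) (n : ℕ) :
    (blockStart ψ v n : ℝ) = letterSum (fun a => ((ψ a).length : ℝ)) v n := by
  induction n with
  | zero => simp [letterSum]
  | succ n ih => rw [blockStart_succ, Nat.cast_add, ih, letterSum_succ]

lemma sum_map_eq_mulVec (ψ : ZMod 2 → Word) (f : ZMod 2 → ℝ) :
    (fun a => ((ψ a).map f).sum) = (IncMat ψ).map (Nat.cast : ℕ → ℝ) *ᵥ f := by
  funext a
  simp [sum_map_eq_sum_count, Matrix.mulVec, dotProduct, IncMat]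

lemma FixesPrefixes.letterSum_blockStart_of_mulVec_eq {μ : ℝ} (h : FixesPrefixes ψ v)
    (hf : (IncMat ψ).map (Nat.cast : ℕ → ℝ) *ᵥ f = μ • f) (n : ℕ) :
    letterSum f v (blockStart ψ v n) = μ * letterSum f v n := by
  rw [h.letterSum_blockStart, sum_map_eq_mulVec, hf, letterSum_smul]

lemma forall_zmod_two {p : ZMod 2 → Prop} : (∀ a, p a) ↔ p 0 ∧ p 1 := Fin.forall_fin_two

lemma sum_zmod_two {M : Type*} [AddCommMonoid M] (f : ZMod 2 → M) : ∑ a, f a = f 0 + f 1 :=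
  Fin.sum_univ_two f

lemma exists_forall_abs_le (f : ZMod 2 → ℝ) : ∃ K, ∀ a, |f a| ≤ K :=
  ⟨∑ a, |f a|, fun a =>
    single_le_sum (f := fun a => |f a|) (fun _ _ => abs_nonneg _) (mem_univ a)⟩

lemma exists_eigenvectors_of_pos {A : Matrix (ZMod 2) (ZMod 2) ℝ} (hA : ∀ a b, 0 < A a b) :
    ∃ (θ μ : ℝ) (u w : ZMod 2 → ℝ), |μ| < θ ∧ (∀ a, 0 < u a) ∧ w ≠ 0 ∧
      A *ᵥ u = θ • u ∧ A *ᵥ w = μ • w := by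
  set r := √((A 0 0 - A 1 1) ^ 2 + 4 * (A 0 1 * A 1 0))
  have hbc : 0 < A 0 1 * A 1 0 := mul_pos (hA 0 1) (hA 1 0)
  have hr_sq : r ^ 2 = (A 0 0 - A 1 1) ^ 2 + 4 * (A 0 1 * A 1 0) := Real.sq_sqrt (by positivity)
  have habs : |A 0 0 - A 1 1| < r := Real.lt_sqrt_of_sq_lt (by rw [sq_abs]; linarith)
  have hr₀ : 0 < r := (abs_nonneg _).trans_lt habs
  have hmulVec : ∀ (x : ZMod 2 → ℝ) a, (A *ᵥ x) a = A a 0 * x 0 + A a 1 * x 1 := fun x a =>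
    sum_zmod_two fun b => A a b * x b
  have heigen : ∀ (t : ℝ) (x : ZMod 2 → ℝ), x 0 = A 0 1 → x 1 = t - A 0 0 →
      (t - A 0 0) * (t - A 1 1) = A 0 1 * A 1 0 → A *ᵥ x = t • x := fun t x h₀ h₁ ht => by
    refine funext (forall_zmod_two.2 ⟨?_, ?_⟩)
    · rw [hmulVec, Pi.smul_apply, smul_eq_mul, h₀, h₁]
      ring
    · rw [hmulVec, Pi.smul_apply, smul_eq_mul, h₀, h₁]
      linarith
  refine ⟨(A 0 0 + A 1 1 + r) / 2, (A 0 0 + A 1 1 - r) / 2,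
    ![A 0 1, (A 0 0 + A 1 1 + r) / 2 - A 0 0],
    ![A 0 1, (A 0 0 + A 1 1 - r) / 2 - A 0 0], ?_, forall_zmod_two.2 ⟨hA 0 1, ?_⟩,
    fun h => (hA 0 1).ne' (congrFun h 0), heigen _ _ rfl rfl ?_, heigen _ _ rfl rfl ?_⟩
  · rw [abs_lt]
    constructor <;> linarith [hA 0 0, hA 1 1]
  · change 0 < (A 0 0 + A 1 1 + r) / 2 - A 0 0
    linarith [le_abs_self (A 0 0 - A 1 1)]
  · linarith
  · linarith

end LetterSums

section BalancedLetters

variable {ψ : ZMod 2 → Word} {v : ℕ → ZMod 2}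

lemma PositivelyFixes.exists_blockStart_dist_le (h : PositivelyFixes ψ v) :
    ∃ T : ℝ, ∀ m, ∃ i, dist m (blockStart ψ v i) ≤ T := by
  obtain ⟨T, hT⟩ := h.exists_blockStart_near
  refine ⟨T, fun m => ?_⟩
  obtain ⟨i, hmi, him⟩ := hT m
  refine ⟨i, ?_⟩
  rw [dist_comm, Nat.dist_eq, abs_of_nonneg (sub_nonneg.2 (Nat.cast_le.2 hmi)), sub_le_iff_le_add']
  exact_mod_cast him

lemma PositivelyFixes.exists_sublinearIncrements_letterSum (h : PositivelyFixes ψ v) :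
    ∃ f : ZMod 2 → ℝ, f ≠ 0 ∧ SublinearIncrements (letterSum f v) := by
  obtain ⟨θ, μ, u, w, hμθ, hu, hw, hAu, hAw⟩ := exists_eigenvectors_of_pos
    (A := (IncMat ψ).map (Nat.cast : ℕ → ℝ)) fun a b =>
      Nat.cast_pos.2 (List.count_pos_iff.2 (h.mem a b))
  have hu_sum := h.fixesPrefixes.letterSum_blockStart_of_mulVec_eq hAu
  have hw_sum := h.fixesPrefixes.letterSum_blockStart_of_mulVec_eq hAw
  obtain ⟨α, hα, hαu⟩ : ∃ α > 0, ∀ a, α ≤ u a :=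
    ⟨min (u 0) (u 1), lt_min (hu 0) (hu 1), forall_zmod_two.2 ⟨min_le_left .., min_le_right ..⟩⟩
  obtain ⟨β, hβ⟩ := exists_forall_abs_le u
  obtain ⟨K, hK⟩ := exists_forall_abs_le w
  obtain ⟨T, hT⟩ := h.exists_blockStart_dist_le
  refine ⟨w, hw, .of_renormalization (R := 0) (Λ := letterSum u v) (.of_bounded (C := 0) (by simp))
    (abs_nonneg μ) hμθ hα (mul_dist_le_dist_letterSum hαu v) (dist_letterSum_le hβ v)
    (dist_letterSum_le hK v) hT (fun i j => ?_) fun i j => ?_⟩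
  · rw [hu_sum, hu_sum, Real.dist_eq, Real.dist_eq, ← mul_sub, abs_mul]
    gcongr
    exact le_abs_self θ
  · simp [hw_sum, Real.dist_eq, ← mul_sub, abs_mul]

lemma add_eq_zero_of_sublinearIncrements {f : ZMod 2 → ℝ}
    (hE : ∀ w : Word, IsFactor v w → IsFactor v (Ex w))
    (hf : SublinearIncrements (letterSum f v)) : f 0 + f 1 = 0 := by
  set c := f 0 + f 1 with hc
  have hcompl : ∀ a, f (a + 1) = c - f a :=
    forall_zmod_two.2 ⟨by simp [hc], by simp [hc, show (1 + 1 : ZMod 2) = 0 from rfl]⟩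
  have hblock : ∀ n, ∃ k, n * c = letterSum f v (k + n) - letterSum f v k + letterSum f v n := by
    intro n
    obtain ⟨k, hk⟩ := exists_complement hE 0 n
    refine ⟨k, ?_⟩
    have hsum : ∑ i ∈ range n, f (v (k + i)) = ∑ i ∈ range n, (c - f (v i)) :=
      sum_congr rfl fun i hi => by rw [hk i (mem_range.1 hi), zero_add, hcompl]
    rw [letterSum, sum_range_add, hsum]
    simp [letterSum]
  by_contra hne
  have : 0 < |c| := abs_pos.2 hne
  obtain ⟨C, hC⟩ := hf (|c| / 4) (by positivity)
  obtain ⟨n, hn⟩ := exists_nat_gt (2 * C / (|c| / 2))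
  obtain ⟨k, hk⟩ := hblock n
  refine hn.not_ge ((le_div_iff₀ (by positivity)).2 ?_)
  have hdist : ∀ a, dist (a + n) a = (n : ℝ) := by simp [Nat.dist_eq]
  have hk' := hC (k + n) k
  have hn' := hC (0 + n) 0
  rw [hdist, Real.dist_eq] at hk' hn'
  have hn_c : n * |c| ≤ |letterSum f v (k + n) - letterSum f v k| + |letterSum f v n| := by
    rw [← Nat.abs_cast n, ← abs_mul, hk]
    exact abs_add_le _ _
  simp only [zero_add, letterSum, range_zero, sum_empty, sub_zero] at hn' hk' hn_c ⊢
  linarith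

/-- The nontrivial character of `ZMod 2`, with real values. -/
def letterSign (a : ZMod 2) : ℝ := if a = 0 then 1 else -1

theorem PositivelyFixes.sublinearIncrements_letterSum_letterSign (h : PositivelyFixes ψ v)
    (hE : ∀ w : Word, IsFactor v w → IsFactor v (Ex w)) :
    SublinearIncrements (letterSum letterSign v) := by
  obtain ⟨f, hf₀, hf⟩ := h.exists_sublinearIncrements_letterSum
  have hsum := add_eq_zero_of_sublinearIncrements hE hf
  have hf_eq : f = f 0 • letterSign :=
    funext (forall_zmod_two.2 ⟨by simp [letterSign],
      by simp [letterSign, eq_neg_of_add_eq_zero_right hsum]⟩)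
  have hne : f 0 ≠ 0 := fun h₀ => hf₀ (by rw [hf_eq, h₀, zero_smul])
  have hletterSign : letterSign = (f 0)⁻¹ • f := by rw [eq_inv_smul_iff₀ hne, ← hf_eq]
  rw [hletterSign]
  simpa only [funext (letterSum_smul _ _ _)] using hf.const_mul (f 0)⁻¹

end BalancedLetters

section DifferenceSlope

variable {ψ : ZMod 2 → Word} {s v : ℕ → ZMod 2} {f : ZMod 2 → ℝ}

lemma letterSign_add (a b : ZMod 2) : letterSign (a + b) = letterSign a * letterSign b := by
  revert a b
  simp [forall_zmod_two, letterSign, show (1 + 1 : ZMod 2) = 0 from rfl]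

lemma abs_letterSign (a : ZMod 2) : |letterSign a| = 1 := by
  revert a
  simp [forall_zmod_two, letterSign]

/-- The mean of `f` over the two letters. -/
noncomputable def letterMean (f : ZMod 2 → ℝ) : ℝ := (f 0 + f 1) / 2

/-- The coefficient of `letterSign` in the Fourier expansion of `f`. -/
noncomputable def signCoeff (f : ZMod 2 → ℝ) : ℝ := (f 0 - f 1) / 2

lemma eq_letterMean_add_signCoeff (f : ZMod 2 → ℝ) (a : ZMod 2) :
    f a = letterMean f + signCoeff f * letterSign a := by
  revert a
  simp only [forall_zmod_two, letterMean, signCoeff, letterSign, if_true, one_ne_zero, if_false]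
  constructor <;> ring

lemma abs_signCoeff_le {K : ℝ} (h : ∀ a, |f a| ≤ K) : |signCoeff f| ≤ K := by
  rw [signCoeff, abs_div, abs_two, div_le_iff₀ zero_lt_two]
  linarith [abs_sub (f 0) (f 1), h 0, h 1]

lemma letterSum_eq_letterMean_add (f : ZMod 2 → ℝ) (s : ℕ → ZMod 2) (n : ℕ) :
    letterSum f s n = letterMean f * n + signCoeff f * letterSum letterSign s n := by
  simp only [letterSum, eq_letterMean_add_signCoeff f, sum_add_distrib, mul_sum, sum_const,
    card_range, nsmul_eq_mul, mul_comm (n : ℝ)]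

/-- The expansion of `p ⊗ q` in the characters of `ZMod 2 × ZMod 2`. -/
lemma sum_mul_succ_eq (p q : ZMod 2 → ℝ) (s : ℕ → ZMod 2) (n : ℕ) :
    ∑ i ∈ range n, p (s i) * q (s (i + 1)) =
      letterMean p * letterMean q * n +
      (signCoeff p * letterMean q + letterMean p * signCoeff q) * letterSum letterSign s n +
      letterMean p * signCoeff q * (letterSign (s n) - letterSign (s 0)) +
      signCoeff p * signCoeff q * letterSum letterSign (diffSeq s) n := by
  induction n with
  | zero => simp [letterSum]
  | succ n ih =>
    rw [sum_range_succ, ih, letterSum_succ, letterSum_succ, diffSeq, letterSign_add,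
      eq_letterMean_add_signCoeff p (s n), eq_letterMean_add_signCoeff q (s (n + 1)), Nat.cast_succ]
    ring

/-- The word of sums of consecutive letters of `w`. -/
def diffWord (w : Word) : Word := List.zipWith (· + ·) w w.tail

lemma length_diffWord (w : Word) : (diffWord w).length = w.length - 1 := by
  simp [diffWord]

lemma OccAt.diffWord {w : Word} {m : ℕ} (h : OccAt s w m) :
    OccAt (diffSeq s) (diffWord w) m := by
  refine occAt_iff_forall_getElem.2 fun i hi => ?_
  rw [length_diffWord] at hi
  rw [diffSeq, add_assoc, occAt_iff_forall_getElem.1 h i (by omega),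
    occAt_iff_forall_getElem.1 h (i + 1) (by omega)]
  simp [_root_.diffWord]

lemma OccAt.headD_eq {w : Word} {m : ℕ} (h : OccAt s w m) (hw : w ≠ []) : w.headD 0 = s m := by
  obtain ⟨a, w, rfl⟩ := List.exists_cons_of_ne_nil hw
  exact (occAt_cons.1 h).1.symm

lemma OccAt.getLastD_eq {w : Word} {m : ℕ} (h : OccAt s w m) (hw : w ≠ []) :
    w.getLastD 0 = s (m + (w.length - 1)) := by
  have hlen := List.length_pos_iff.2 hw
  rw [occAt_iff_forall_getElem.1 h _ (by omega)]
  simp [List.getLastD_eq_getLast?, List.getLast?_eq_getElem?, hlen]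

lemma PositivelyFixes.ne_nil (h : PositivelyFixes ψ v) (a : ZMod 2) : ψ a ≠ [] :=
  List.ne_nil_of_mem (h.mem a 0)

/-- Only the last difference in a block depends on the next block, and only through its first
letter. -/
lemma PositivelyFixes.letterSum_diffSeq_blockStart (h : PositivelyFixes ψ v) (n : ℕ) :
    letterSum letterSign (diffSeq v) (blockStart ψ v n) =
      letterSum (fun a => ((diffWord (ψ a)).map letterSign).sum) v n +
      ∑ i ∈ range n,
        letterSign ((ψ (v i)).getLastD 0) * letterSign ((ψ (v (i + 1))).headD 0) := by
  induction n with
  | zero => simp [letterSum]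
  | succ n ih =>
    have hocc := h.occAt_blockStart n
    have hlen := h.two_le_length (v n)
    have hblock := hocc.diffWord.letterSum_add letterSign
    have hend : blockStart ψ v (n + 1) = blockStart ψ v n + ((ψ (v n)).length - 1) + 1 := by
      rw [blockStart_succ]
      omega
    have hlast : diffSeq v (blockStart ψ v n + ((ψ (v n)).length - 1)) =
        (ψ (v n)).getLastD 0 + (ψ (v (n + 1))).headD 0 := by
      rw [hocc.getLastD_eq (h.ne_nil _), (h.occAt_blockStart (n + 1)).headD_eq (h.ne_nil _), hend,
        diffSeq]
    rw [length_diffWord] at hblock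
    rw [hend, letterSum_succ, hblock, hlast, letterSign_add, ih, letterSum_succ, sum_range_succ]
    ring

lemma letterSign_mem (K : Subfield ℝ) (a : ZMod 2) : letterSign a ∈ K := by
  rw [letterSign]
  split_ifs
  exacts [one_mem K, neg_mem (one_mem K)]

lemma letterMean_mem {K : Subfield ℝ} (hf : ∀ a, f a ∈ K) : letterMean f ∈ K :=
  div_mem (add_mem (hf 0) (hf 1)) (ofNat_mem K 2)

lemma signCoeff_mem {K : Subfield ℝ} (hf : ∀ a, f a ∈ K) : signCoeff f ∈ K :=
  div_mem (sub_mem (hf 0) (hf 1)) (ofNat_mem K 2)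

lemma PositivelyFixes.exists_rat_letterSum_diffSeq_blockStart (h : PositivelyFixes ψ v)
    (hv : SublinearIncrements (letterSum letterSign v)) :
    ∃ (c κ : ℚ) (R : ℕ → ℝ), |κ| ≤ 1 ∧ SublinearIncrements R ∧
      ∀ n, letterSum letterSign (diffSeq v) (blockStart ψ v n) =
        c * n + κ * letterSum letterSign (diffSeq v) n + R n := by
  let r a := ((diffWord (ψ a)).map letterSign).sum
  let p a := letterSign ((ψ a).getLastD 0)
  let q a := letterSign ((ψ a).headD 0)
  let K := (Rat.castHom ℝ).fieldRange
  have hr : ∀ a, r a ∈ K := fun a => list_sum_mem fun x hx => by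
    obtain ⟨b, -, rfl⟩ := List.mem_map.1 hx
    exact letterSign_mem K b
  have hp : ∀ a, p a ∈ K := fun a => letterSign_mem K _
  have hq : ∀ a, q a ∈ K := fun a => letterSign_mem K _
  obtain ⟨c, hc⟩ : ∃ c : ℚ, (c : ℝ) = letterMean r + letterMean p * letterMean q :=
    add_mem (letterMean_mem hr) (mul_mem (letterMean_mem hp) (letterMean_mem hq))
  obtain ⟨κ, hκ⟩ : ∃ κ : ℚ, (κ : ℝ) = signCoeff p * signCoeff q :=
    mul_mem (signCoeff_mem hp) (signCoeff_mem hq)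
  refine ⟨c, κ, fun n => (signCoeff r + signCoeff p * letterMean q + letterMean p * signCoeff q) *
    letterSum letterSign v n +
    letterMean p * signCoeff q * (letterSign (v n) - letterSign (v 0)), ?_, ?_, fun n => ?_⟩
  · have : |(κ : ℝ)| ≤ 1 := by
      rw [hκ, abs_mul]
      exact mul_le_one₀ (abs_signCoeff_le fun a => (abs_letterSign _).le) (abs_nonneg _)
        (abs_signCoeff_le fun a => (abs_letterSign _).le)
    exact_mod_cast this
  · refine (hv.const_mul _).add (.const_mul (.of_bounded (C := 2) fun n => ?_) _)
    linarith [abs_sub (letterSign (v n)) (letterSign (v 0)), abs_letterSign (v n),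
      abs_letterSign (v 0)]
  · rw [h.letterSum_diffSeq_blockStart, letterSum_eq_letterMean_add r, sum_mul_succ_eq p q, hc, hκ]
    ring

lemma PositivelyFixes.exists_rat_blockStart (h : PositivelyFixes ψ v)
    (hv : SublinearIncrements (letterSum letterSign v)) :
    ∃ (ℓ : ℚ) (R : ℕ → ℝ), 2 ≤ ℓ ∧ SublinearIncrements R ∧
      ∀ n, (blockStart ψ v n : ℝ) = ℓ * n + R n := by
  refine ⟨((ψ 0).length + (ψ 1).length) / 2, _, ?_,
    hv.const_mul (signCoeff fun a => ((ψ a).length : ℝ)), fun n => ?_⟩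
  · have h₀ : (2 : ℚ) ≤ (ψ 0).length := by exact_mod_cast h.two_le_length 0
    have h₁ : (2 : ℚ) ≤ (ψ 1).length := by exact_mod_cast h.two_le_length 1
    linarith
  · rw [natCast_blockStart, letterSum_eq_letterMean_add]
    simp [letterMean]

lemma PositivelyFixes.exists_rat_sublinearIncrements (h : PositivelyFixes ψ v)
    (hE : ∀ w : Word, IsFactor v w → IsFactor v (Ex w)) :
    ∃ δ : ℚ, SublinearIncrements (letterSum (fun a => letterSign a - δ) (diffSeq v)) := by
  have hv := h.sublinearIncrements_letterSum_letterSign hE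
  obtain ⟨c, κ, R, hκ, hR, hD⟩ := h.exists_rat_letterSum_diffSeq_blockStart hv
  obtain ⟨ℓ, R', hℓ, hR', hL⟩ := h.exists_rat_blockStart hv
  have hκℓ : ℓ - κ ≠ 0 := by linarith [le_abs_self κ]
  obtain ⟨δ, hδ⟩ : ∃ δ, c = δ * (ℓ - κ) := ⟨c / (ℓ - κ), (div_mul_cancel₀ c hκℓ).symm⟩
  refine ⟨δ, ?_⟩
  set G := letterSum (fun a => letterSign a - δ) (diffSeq v) with hG_def
  have hG : ∀ n, G n = letterSum letterSign (diffSeq v) n - δ * n := fun n => by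
    simp [hG_def, letterSum, mul_comm]
  have hG_block : ∀ n, G (blockStart ψ v n) = κ * G n + (R n + -δ * R' n) := fun n => by
    rw [hG, hG, hD, hL, hδ]
    push_cast
    ring
  obtain ⟨K, hK⟩ := exists_forall_abs_le fun a => letterSign a - δ
  obtain ⟨T, hT⟩ := h.exists_blockStart_dist_le
  refine (hR.add (hR'.const_mul (-δ))).of_renormalization (Λ := fun n => n) (θ := 2) (α := 1)
    (β := 1) (abs_nonneg (κ : ℝ)) ?_ one_pos (fun m n => (one_mul _).le) (fun m n => (one_mul _).ge)
    (dist_letterSum_le hK _) hT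
    (mul_dist_le_dist (F := fun n => (blockStart ψ v n : ℝ)) fun n => ?_) fun i j => ?_
  · exact_mod_cast hκ.trans_lt one_lt_two
  · rw [blockStart_succ, Nat.cast_add, add_sub_cancel_left]
    exact_mod_cast h.two_le_length (v n)
  · rw [hG_block, hG_block]
    refine (dist_add_add_le ..).trans_eq ?_
    rw [Real.dist_eq (κ * _), ← mul_sub, abs_mul, ← Real.dist_eq]

end DifferenceSlope

section Frequencies

variable {s : ℕ → ZMod 2} {w x y : Word} {a b c : ZMod 2} {r r' : ℝ} {n : ℕ}

/-- The word `w` has asymptotic frequency `r` among the prefixes of the sequence `s`. -/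
def HasFreq (s : ℕ → ZMod 2) (w : Word) (r : ℝ) : Prop :=
  Tendsto (fun N => (Nat.count (OccAt s w) N : ℝ) / N) atTop (𝓝 r)

/-- Both right extensions of `x` are factors of `s`. -/
def RightSpecial (s : ℕ → ZMod 2) (x : Word) : Prop := ∀ b, IsFactor s (x ++ [b])

lemma eq_of_ne_of_ne (hb : b ≠ a) (hc : c ≠ a) : b = c := by
  revert a b c
  decide

lemma tendsto_natCast_div_natCast : Tendsto (fun N : ℕ => (N : ℝ) / N) atTop (𝓝 1) :=
  tendsto_const_nhds.congr' <| (eventually_gt_atTop 0).mono fun _ hN =>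
    (div_self (Nat.cast_ne_zero.2 hN.ne')).symm

lemma hasFreq_nil (s : ℕ → ZMod 2) : HasFreq s [] 1 := by
  have hcount : ∀ N, Nat.count (OccAt s []) N = N := fun N => Nat.count_of_forall fun m _ => rfl
  simpa only [HasFreq, hcount] using tendsto_natCast_div_natCast

lemma hasFreq_of_not_isFactor (h : ¬ IsFactor s w) : HasFreq s w 0 := by
  have hcount : ∀ N, Nat.count (OccAt s w) N = 0 := fun N =>
    Nat.count_of_forall_not fun m _ hm => h ⟨m, hm⟩
  simp [HasFreq, hcount]

lemma SublinearIncrements.hasFreq {δ : ℝ}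
    (h : SublinearIncrements (letterSum (fun a => letterSign a - δ) s)) :
    HasFreq s [0] ((1 + δ) / 2) := by
  have hindicator : ∀ a : ZMod 2, ((if a = 0 then 1 else 0 : ℕ) : ℝ) = (1 + letterSign a) / 2 :=
    fun a => by rw [letterSign]; split_ifs <;> norm_num
  have hcount : ∀ N, (Nat.count (OccAt s [0]) N : ℝ) =
      (1 + δ) / 2 * N + 1 / 2 * letterSum (fun a => letterSign a - δ) s N := fun N => by
    induction N with
    | zero => simp [letterSum]
    | succ N ih =>
      simp only [Nat.count_succ, occAt_singleton, letterSum_succ, Nat.cast_add, Nat.cast_one, ih,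
        hindicator]
      ring
  have hlim := (tendsto_natCast_div_natCast.const_mul ((1 + δ) / 2)).add
    (h.tendsto_div.const_mul (1 / 2))
  simpa only [HasFreq, hcount, add_div, mul_div_assoc, mul_one, mul_zero, add_zero] using hlim

lemma HasFreq.append_singleton (h : HasFreq s x r) (hx : ¬ RightSpecial s x) (b : ZMod 2) :
    HasFreq s (x ++ [b]) r ∨ HasFreq s (x ++ [b]) 0 := by
  obtain ⟨c, hc⟩ := not_forall.1 hx
  by_cases hbc : b = c
  · exact .inr (hasFreq_of_not_isFactor (hbc ▸ hc))
  · have hocc : ∀ m, OccAt s (x ++ [b]) m ↔ OccAt s x m := fun m => by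
      simp only [occAt_append, occAt_singleton, and_iff_left_iff_imp]
      refine fun hm => eq_of_ne_of_ne (a := c) (fun hmc => hc ⟨m, ?_⟩) hbc
      exact occAt_append.2 ⟨hm, occAt_singleton.2 hmc⟩
    left
    simpa only [HasFreq, Nat.count_eq_card_filter_range, hocc] using h

lemma count_cons_add_count_cons (s : ℕ → ZMod 2) (a : ZMod 2) (y : Word) (N : ℕ) :
    Nat.count (OccAt s (a :: y)) N + Nat.count (OccAt s ((a + 1) :: y)) N +
      (if OccAt s y 0 then 1 else 0) = Nat.count (OccAt s y) (N + 1) := by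
  induction N with
  | zero => simp [Nat.count_succ]
  | succ N ih =>
    rw [Nat.count_succ _ (N + 1), ← ih, Nat.count_succ, Nat.count_succ]
    simp only [occAt_cons]
    by_cases h : s N = a
    · simp only [h, true_and, left_eq_add, one_ne_zero, false_and, ↓reduceIte, add_zero]
      ring
    · simp only [show s N = a + 1 from eq_of_ne_of_ne h (by simp), add_eq_left, one_ne_zero,
        false_and, ↓reduceIte, add_zero, true_and]
      ring

lemma HasFreq.cons_of_cons (hy : HasFreq s y r) (ha : HasFreq s ((a + 1) :: y) r') :
    HasFreq s (a :: y) (r - r') := by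
  let e N : ℝ := (if OccAt s y N then 1 else 0) - if OccAt s y 0 then 1 else 0
  have hcount : ∀ N, (Nat.count (OccAt s (a :: y)) N : ℝ) =
      Nat.count (OccAt s y) N - Nat.count (OccAt s ((a + 1) :: y)) N + e N := fun N => by
    have hN := congrArg (Nat.cast : ℕ → ℝ) (count_cons_add_count_cons s a y N)
    rw [Nat.count_succ] at hN
    push_cast at hN
    linarith
  have he : Tendsto (fun N : ℕ => e N / N) atTop (𝓝 0) := by
    refine tendsto_bdd_div_atTop_nhds_zero (b := -1) (B := 1) (.of_forall fun N => ?_)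
      (.of_forall fun N => ?_) tendsto_natCast_atTop_atTop <;>
    · simp only [e]
      split_ifs <;> norm_num
  simpa only [HasFreq, hcount, add_div, sub_div, add_zero] using (Tendsto.sub hy ha).add he

lemma exists_hasFreq_mem {A : AddSubgroup ℝ} (h₁ : 1 ∈ A) (hr : r ∈ A) (h₀ : HasFreq s [0] r)
    (hspecial : ∀ x y : Word, x.length = y.length → RightSpecial s x → RightSpecial s y → x = y)
    (w : Word) : ∃ r ∈ A, HasFreq s w r := by
  induction hn : w.length generalizing w with
  | zero => exact ⟨1, h₁, List.length_eq_zero_iff.1 hn ▸ hasFreq_nil s⟩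
  | succ n ih =>
    obtain ⟨a, y, rfl⟩ := List.exists_cons_of_length_eq_add_one hn
    obtain ⟨r₁, hr₁, hy⟩ := ih y (by simpa using hn)
    rcases List.eq_nil_or_concat y with rfl | ⟨x, b, rfl⟩
    · by_cases ha : a = 0
      · exact ⟨r, hr, ha ▸ h₀⟩
      · obtain rfl : a = 1 := eq_of_ne_of_ne ha one_ne_zero
        exact ⟨r₁ - r, sub_mem hr₁ hr, hy.cons_of_cons h₀⟩
    rw [List.concat_eq_append] at *
    have hnot : ∀ c, ¬ RightSpecial s (c :: x) → ∃ r ∈ A, HasFreq s (c :: (x ++ [b])) r := by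
      intro c hc
      obtain ⟨r₂, hr₂, hcx⟩ := ih (c :: x) (by simpa using hn)
      exact (hcx.append_singleton hc b).elim (⟨r₂, hr₂, ·⟩) (⟨0, zero_mem A, ·⟩)
    by_cases ha : RightSpecial s (a :: x)
    · obtain ⟨r₂, hr₂, hax⟩ := hnot (a + 1) fun h => by simpa using hspecial _ _ (by simp) ha h
      exact ⟨r₁ - r₂, sub_mem hr₁ hr₂, hy.cons_of_cons hax⟩
    · exact hnot a ha

lemma UniformlyRecurrent.pos_of_hasFreq (hs : UniformlyRecurrent s) (hw : IsFactor s w)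
    (h : HasFreq s w r) : 0 < r := by
  obtain ⟨G, hG⟩ := hs w hw
  have hG_pos : 0 < G := by
    obtain ⟨i, h₁, h₂, -⟩ := hG 0
    omega
  have hcount : ∀ m, m ≤ Nat.count (OccAt s w) (m * G) := fun m => by
    induction m with
    | zero => exact zero_le
    | succ m ih =>
      obtain ⟨i, hmi, him, hi⟩ := hG (m * G)
      calc m + 1 ≤ Nat.count (OccAt s w) (m * G) + 1 := by omega
        _ ≤ Nat.count (OccAt s w) i + 1 := by gcongr
        _ = Nat.count (OccAt s w) (i + 1) := by rw [Nat.count_succ, if_pos hi]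
        _ ≤ Nat.count (OccAt s w) ((m + 1) * G) := Nat.count_monotone _ (by rw [add_one_mul]; omega)
  have hlim := Tendsto.comp h (tendsto_id.atTop_mul_const' hG_pos)
  refine (inv_pos.2 (Nat.cast_pos.2 hG_pos)).trans_le
    (ge_of_tendsto hlim ((eventually_gt_atTop 0).mono fun m hm => ?_))
  have : (0 : ℝ) < m := Nat.cast_pos.2 hm
  have hG' : (0 : ℝ) < G := Nat.cast_pos.2 hG_pos
  have hcount' : (m : ℝ) ≤ Nat.count (OccAt s w) (m * G) := Nat.cast_le.2 (hcount m)
  simp only [Function.comp_apply, id_eq, Nat.cast_mul]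
  rw [inv_le_iff_one_le_mul₀ hG', div_mul_eq_mul_div, one_le_div (by positivity)]
  gcongr

lemma sum_le_one_of_hasFreq {F : Finset Word} {ρ : Word → ℝ} (hlen : ∀ w ∈ F, w.length = n)
    (hfreq : ∀ w ∈ F, HasFreq s w (ρ w)) : ∑ w ∈ F, ρ w ≤ 1 := by
  have hcount : ∀ N, ∑ w ∈ F, Nat.count (OccAt s w) N ≤ N := fun N => by
    simp only [Nat.count_eq_card_filter_range]
    have hdisj : (F : Set Word).PairwiseDisjoint fun w => {m ∈ range N | OccAt s w m} := by
      refine fun w hw w' hw' hne => disjoint_left.2 fun m hm hm' => hne ?_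
      rw [← (mem_filter.1 hm).2.window_eq (hlen w hw), (mem_filter.1 hm').2.window_eq (hlen w' hw')]
    rw [← card_biUnion hdisj]
    exact (card_le_card (biUnion_subset.2 fun w _ => filter_subset _ _)).trans_eq (card_range N)
  refine le_of_tendsto' (tendsto_finsetSum F hfreq) fun N => ?_
  rw [← sum_div]
  exact div_le_one_of_le₀ (by exact_mod_cast hcount N) (Nat.cast_nonneg N)

end Frequencies

section Sturmian

variable {s : ℕ → ZMod 2} {n : ℕ} {r : ℝ}

/-- The factors of length `n` of the sequence `s`. -/
def factors (s : ℕ → ZMod 2) (n : ℕ) : Set Word := {w | w.length = n ∧ IsFactor s w}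

lemma finite_factors (s : ℕ → ZMod 2) (n : ℕ) : (factors s n).Finite :=
  (List.finite_length_eq (ZMod 2) n).subset fun _ h => h.1

lemma mem_factors_iff {w : Word} : w ∈ factors s n ↔ ∃ m, window s m n = w := by
  constructor
  · rintro ⟨hn, m, hm⟩
    exact ⟨m, hm.window_eq hn⟩
  · rintro ⟨m, rfl⟩
    exact ⟨length_window s m n, isFactor_window s m n⟩

lemma window_mem_factors (s : ℕ → ZMod 2) (m n : ℕ) : window s m n ∈ factors s n :=
  mem_factors_iff.2 ⟨m, rfl⟩

lemma eq_of_rightSpecial {x y : Word} (hs : Cplx s (n + 1) = Cplx s n + 1) (hx : x.length = n)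
    (hy : y.length = n) (hxs : RightSpecial s x) (hys : RightSpecial s y) : x = y := by
  by_contra hne
  have hext : ∀ w ∈ factors s n, ∃ b, w ++ [b] ∈ factors s (n + 1) := fun w hw => by
    obtain ⟨m, rfl⟩ := mem_factors_iff.1 hw
    exact ⟨s (m + n), window_succ s m n ▸ window_mem_factors s m (n + 1)⟩
  choose! b hb using hext
  set E := (fun w : Word => w ++ [b w]) '' factors s n
  have hE_card : E.ncard = Cplx s n :=
    Set.ncard_image_of_injective _ fun w w' h => (List.append_inj' h rfl).1
  have hnot : ∀ w, w ++ [b w + 1] ∉ E := by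
    rintro w ⟨w', -, h⟩
    obtain ⟨rfl, h'⟩ := List.append_inj' h rfl
    simp at h'
  have hsub : insert (x ++ [b x + 1]) (insert (y ++ [b y + 1]) E) ⊆ factors s (n + 1) := by
    refine Set.insert_subset ⟨by simp [hx], hxs _⟩ (Set.insert_subset ⟨by simp [hy], hys _⟩ ?_)
    rintro _ ⟨w, hw, rfl⟩
    exact hb w hw
  have hx_not : x ++ [b x + 1] ∉ insert (y ++ [b y + 1]) E := by
    rw [Set.mem_insert_iff, not_or]
    exact ⟨fun h => hne (List.append_inj' h rfl).1, hnot x⟩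
  have hE_fin : E.Finite := (finite_factors s n).image _
  have hle : _ ≤ Cplx s (n + 1) := Set.ncard_le_ncard hsub (finite_factors s (n + 1))
  rw [Set.ncard_insert_of_notMem hx_not (hE_fin.insert _),
    Set.ncard_insert_of_notMem (hnot y) hE_fin, hE_card] at hle
  omega

/-- A sequence over `ZMod 2` with factor complexity `n + 1`. -/
def IsSturmian (s : ℕ → ZMod 2) : Prop := ∀ n, Cplx s n = n + 1

theorem IsSturmian.irrational_of_hasFreq (hs : IsSturmian s) (hrec : UniformlyRecurrent s)
    (h : HasFreq s [0] r) : Irrational r := by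
  rintro ⟨p, rfl⟩
  set A := AddSubgroup.zmultiples ((p.den : ℝ)⁻¹)
  have hden : (0 : ℝ) < p.den := Nat.cast_pos.2 p.den_pos
  have h₁ : 1 ∈ A := ⟨p.den, by simp [hden.ne']⟩
  have hp : (p : ℝ) ∈ A := ⟨p.num, by simp [Rat.cast_def, div_eq_mul_inv]⟩
  have hspecial : ∀ x y : Word, x.length = y.length → RightSpecial s x → RightSpecial s y → x = y :=
    fun x y hxy => eq_of_rightSpecial (n := y.length) (by rw [hs, hs]) hxy rfl
  choose ρ hρA hρ using exists_hasFreq_mem h₁ hp h hspecial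
  have hlower : ∀ w ∈ factors s p.den, (p.den : ℝ)⁻¹ ≤ ρ w := fun w hw => by
    obtain ⟨k, hk⟩ := hρA w
    have hpos := hrec.pos_of_hasFreq hw.2 (hρ w)
    simp only [zsmul_eq_mul] at hk
    rw [← hk] at hpos ⊢
    have hk_pos : 0 < k := by exact_mod_cast pos_of_mul_pos_left hpos (inv_pos.2 hden).le
    exact le_mul_of_one_le_left (inv_pos.2 hden).le (by exact_mod_cast hk_pos)
  have hfin := finite_factors s p.den
  have hcard : hfin.toFinset.card = p.den + 1 := by
    rw [← Set.ncard_eq_toFinset_card _ hfin]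
    exact hs p.den
  have hsum : ∑ w ∈ hfin.toFinset, ρ w ≤ 1 :=
    sum_le_one_of_hasFreq (fun w hw => (hfin.mem_toFinset.1 hw).1) fun w _ => hρ w
  have hle := (card_nsmul_le_sum _ ρ _ fun w hw => hlower w (hfin.mem_toFinset.1 hw)).trans hsum
  rw [hcard, nsmul_eq_mul, ← div_eq_mul_inv, div_le_one hden] at hle
  exact absurd hle (by simp)

end Sturmian

section RoteSequences

variable {v : ℕ → ZMod 2}

lemma diffWord_ex (w : Word) : diffWord (Ex w) = diffWord w := by
  have hadd : ∀ a b : ZMod 2, a + 1 + (b + 1) = a + b := by decide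
  simp [diffWord, Ex, ← List.map_tail, List.zipWith_map, hadd]

lemma eq_of_diffWord_cons_eq {a : ZMod 2} {x y : Word}
    (h : diffWord (a :: x) = diffWord (a :: y)) : x = y := by
  induction x generalizing a y with
  | nil => cases y <;> simp_all [diffWord]
  | cons b x ih =>
    cases y with
    | nil => simp [diffWord] at h
    | cons c y =>
      obtain ⟨hbc, hxy⟩ := List.cons_eq_cons.1 h
      obtain rfl := add_left_cancel hbc
      rw [ih hxy]

lemma two_mul_cplx_diffSeq (hE : ∀ w : Word, IsFactor v w → IsFactor v (Ex w)) (n : ℕ) :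
    2 * Cplx (diffSeq v) n = Cplx v (n + 1) := by
  have hdiff : ∀ m, diffWord (window v m (n + 1)) = window (diffSeq v) m n := fun m =>
    ((occAt_window v m (n + 1)).diffWord.window_eq (by simp [length_diffWord])).symm
  set Φ : Word → ZMod 2 × Word := fun w => (w.headD 0, diffWord w) with hΦ
  have himage : Φ '' factors v (n + 1) = Set.univ ×ˢ factors (diffSeq v) n := by
    ext ⟨a, x⟩
    constructor
    · rintro ⟨w, hw, h⟩
      obtain ⟨m, rfl⟩ := mem_factors_iff.1 hw
      obtain ⟨-, rfl⟩ := Prod.mk.inj h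
      exact ⟨trivial, mem_factors_iff.2 ⟨m, (hdiff m).symm⟩⟩
    · rintro ⟨-, hx⟩
      obtain ⟨m, rfl⟩ := mem_factors_iff.1 hx
      by_cases ha : a = v m
      · exact ⟨window v m (n + 1), window_mem_factors v m (n + 1),
          Prod.ext (by simp [hΦ, window_succ', ha]) (hdiff m)⟩
      · have ha' : a = v m + 1 := eq_of_ne_of_ne ha (by simp)
        exact ⟨Ex (window v m (n + 1)), ⟨by simp [Ex], hE _ (isFactor_window v m (n + 1))⟩,
          Prod.ext (by simp [hΦ, window_succ', ha', Ex]) ((diffWord_ex _).trans (hdiff m))⟩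
  have hinj : Set.InjOn Φ (factors v (n + 1)) := by
    rintro w ⟨hw, -⟩ w' ⟨hw', -⟩ h
    obtain ⟨a, x, rfl⟩ := List.exists_cons_of_length_eq_add_one hw
    obtain ⟨b, y, rfl⟩ := List.exists_cons_of_length_eq_add_one hw'
    obtain ⟨hab, hxy⟩ := Prod.mk.inj h
    obtain rfl : a = b := hab
    rw [eq_of_diffWord_cons_eq hxy]
  calc 2 * Cplx (diffSeq v) n
      = (Set.univ ×ˢ factors (diffSeq v) n : Set (ZMod 2 × Word)).ncard := by
        rw [Set.ncard_prod, Set.ncard_univ, Nat.card_zmod]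
        rfl
    _ = Cplx v (n + 1) := by
        rw [← himage, hinj.ncard_image]
        rfl

lemma IsCSRote.isSturmian_diffSeq (h : IsCSRote v) : IsSturmian (diffSeq v) := fun n => by
  have := two_mul_cplx_diffSeq h.2 n
  rw [h.1 _ n.succ_pos] at this
  omega

end RoteSequences

/-- a complementary symmetric Rote sequence is not a fixed point of any
primitive morphism over `{0,1}`. -/
theorem rote_not_fixed_point (v : ℕ → ZMod 2) (hrote : IsCSRote v) :
    ∀ ψ : ZMod 2 → Word, PrimitiveMorphism ψ → ¬ SubstImage ψ v v := by
  intro ψ hψ hfix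
  obtain ⟨φ, hφ⟩ := hfix.exists_positivelyFixes hψ
  obtain ⟨δ, hδ⟩ := hφ.exists_rat_sublinearIncrements hrote.2
  have hfreq : HasFreq (diffSeq v) [0] ((1 + δ) / 2) := hδ.hasFreq
  have hirr := hrote.isSturmian_diffSeq.irrational_of_hasFreq hφ.uniformlyRecurrent.diffSeq hfreq
  exact hirr ⟨(1 + δ) / 2, by push_cast; rfl⟩
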